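/- Gaussian limit of ball averages (Lemma): let m ≥ 1 be an integer, η > 0, and f : ℝ^m → ℝ a bounded measurable function. Then lim_{k→∞} (1/B_k(k^{1/2} η)) ∫_{B_k(k^{1/2} η)} f(τ₁,…,τ_m) dτ = ∫_{ℝ^m} f(τ) (2πη²)^{−m/2} exp(−‖τ‖²/(2η²)) dτ, where B_k(r) denotes the k-dimensional Euclidean ball of radius r (and its volume π^{k/2} r^k / Γ(k/2 + 1)). -/

import Mathlib

open MeasureTheory Real Filter Topology
open scoped ENNReal NNReal

/-- The volume of the `n`-dimensional Euclidean ball of radius `r`: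
`π^{n/2} r^n / Γ(n/2 + 1)`. -/
noncomputable def Bvol (n : ℕ) (r : ℝ) : ℝ :=
  Real.pi ^ ((n : ℝ) / 2) * r ^ n / Real.Gamma ((n : ℝ) / 2 + 1)

/-- The `n`-dimensional Euclidean ball of radius `r` centered at the origin, as a subset of
`ℝ^n` (with the Euclidean norm). -/
def euclBall (n : ℕ) (r : ℝ) : Set (Fin n → ℝ) :=
  {x | ∑ i, (x i) ^ 2 ≤ r ^ 2}

lemma meas_euclBall (n : ℕ) (r : ℝ) : MeasurableSet (euclBall n r) := by
  unfold euclBall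
  exact measurableSet_le (by fun_prop) measurable_const

lemma euclBall_eq (n : ℕ) {r : ℝ} (hr : 0 ≤ r) :
    euclBall n r = (WithLp.toLp 2) ⁻¹' (Metric.closedBall (0 : EuclideanSpace ℝ (Fin n)) r) := by
  ext x
  simp only [euclBall, Set.mem_ofPred_eq, Set.mem_preimage, mem_closedBall_zero_iff,
    EuclideanSpace.norm_eq, Real.norm_eq_abs, sq_abs]
  rw [Real.sqrt_le_left hr]

lemma vol_euclBall {n : ℕ} (hn : n ≠ 0) {r : ℝ} (hr : 0 ≤ r) :
    volume (euclBall n r) = ENNReal.ofReal (Bvol n r) := by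
  have : Nonempty (Fin n) := ⟨⟨0, Nat.pos_of_ne_zero hn⟩⟩
  rw [euclBall_eq n hr, (PiLp.volume_preserving_toLp (Fin n)).measure_preimage
      Metric.isClosed_closedBall.measurableSet.nullMeasurableSet,
    EuclideanSpace.volume_closedBall, ← ENNReal.ofReal_pow hr,
    ← ENNReal.ofReal_mul (by positivity)]
  congr 1
  unfold Bvol
  rw [Fintype.card_fin, Real.sqrt_eq_rpow, ← Real.rpow_natCast (π ^ _), ← Real.rpow_mul pi_pos.le]
  ring_nf

lemma Bvol_pos (n : ℕ) {r : ℝ} (hr : 0 < r) : 0 < Bvol n r := by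
  unfold Bvol
  have := Real.Gamma_pos_of_pos (show (0 : ℝ) < (n : ℝ) / 2 + 1 by positivity)
  positivity

lemma Bvol_mul (n : ℕ) (r s : ℝ) : Bvol n (r * s) = Bvol n r * s ^ n := by
  unfold Bvol
  rw [mul_pow]; ring

lemma realvol_slice {k : ℕ} (hk : k ≠ 0) {r : ℝ} (hr : 0 < r) (a : ℝ) :
    volume.real {v : Fin k → ℝ | a + ∑ i, v i ^ 2 ≤ r ^ 2} =
      Bvol k r * (√(1 - a / r ^ 2)) ^ k := by
  rcases le_or_gt a (r ^ 2) with h | h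
  · have h1 : 0 ≤ 1 - a / r ^ 2 := by
      rw [sub_nonneg, div_le_one (by positivity)]; exact h
    have : {v : Fin k → ℝ | a + ∑ i, v i ^ 2 ≤ r ^ 2} = euclBall k (r * √(1 - a / r ^ 2)) := by
      ext v
      simp only [euclBall, Set.mem_ofPred_eq]
      rw [mul_pow, Real.sq_sqrt h1, mul_sub, mul_div_cancel₀ _ (by positivity), mul_one,
        le_sub_iff_add_le']
    rw [this, Measure.real, vol_euclBall hk (by positivity), Bvol_mul, ENNReal.toReal_ofReal]
    have := (Bvol_pos k hr).le
    positivity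
  · have : {v : Fin k → ℝ | a + ∑ i, v i ^ 2 ≤ r ^ 2} = ∅ := by
      ext v
      simp only [Set.mem_ofPred_eq, Set.mem_empty_iff_false, iff_false, not_le]
      have : 0 ≤ ∑ i, v i ^ 2 := Finset.sum_nonneg fun i _ => sq_nonneg _
      linarith
    rw [this, Real.sqrt_eq_zero_of_nonpos, zero_pow hk]
    · simp
    · rw [sub_nonpos, one_le_div (by positivity)]; exact h.le

lemma append_mp (m k : ℕ) : ∃ e : ((Fin m → ℝ) × (Fin k → ℝ)) ≃ᵐ (Fin (m + k) → ℝ),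
    MeasurePreserving e volume volume ∧ ∀ p, e p = Fin.append p.1 p.2 := by
  refine ⟨(MeasurableEquiv.sumPiEquivProdPi (fun _ : Fin m ⊕ Fin k => ℝ)).symm.trans
    (MeasurableEquiv.piCongrLeft (fun _ : Fin (m + k) => ℝ) finSumFinEquiv),
    (volume_measurePreserving_piCongrLeft (fun _ : Fin (m + k) => ℝ) finSumFinEquiv).comp
    (volume_measurePreserving_sumPiEquivProdPi_symm (fun _ : Fin m ⊕ Fin k => ℝ)), ?_⟩
  intro p
  funext i
  obtain ⟨j, rfl⟩ := finSumFinEquiv.surjective i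
  simp only [MeasurableEquiv.trans_apply, MeasurableEquiv.coe_piCongrLeft]
  rw [Equiv.piCongrLeft_apply_apply]
  cases j <;> simp [MeasurableEquiv.coe_sumPiEquivProdPi_symm]

lemma slicing {m k : ℕ} (hk : k ≠ 0) {r : ℝ} (hr : 0 < r)
    (f : (Fin m → ℝ) → ℝ) (hfm : Measurable f) (M : ℝ) (hfb : ∀ x, |f x| ≤ M) :
    ∫ τ in euclBall (m + k) r, f (fun i => τ (Fin.castLE (Nat.le_add_right m k) i)) =
      Bvol k r * ∫ u : Fin m → ℝ, f u * (√(1 - (∑ i, u i ^ 2) / r ^ 2)) ^ k := by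
  obtain ⟨e, he, hee⟩ := append_mp m k
  have hint : IntegrableOn (fun τ : Fin (m + k) → ℝ =>
      f (fun i => τ (Fin.castLE (Nat.le_add_right m k) i))) (euclBall (m + k) r) := by
    refine Measure.integrableOn_of_bounded (M := M) ?_ ?_ ?_
    · rw [vol_euclBall (by omega) hr.le]; exact ENNReal.ofReal_ne_top
    · exact (hfm.comp (by fun_prop)).aestronglyMeasurable
    · exact Eventually.of_forall fun x => hfb _
  rw [← integrable_indicator_iff (meas_euclBall _ _)] at hint
  rw [← integral_indicator (meas_euclBall _ _), ← he.integral_comp']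
  have h2 := (he.integrable_comp_emb e.measurableEmbedding).2 hint
  rw [Measure.volume_eq_prod] at h2 ⊢
  simp only [Function.comp_def] at h2
  rw [integral_prod _ h2, ← integral_const_mul]
  congr 1
  funext u
  have hms : MeasurableSet {v : Fin k → ℝ | ∑ i, u i ^ 2 + ∑ i, v i ^ 2 ≤ r ^ 2} :=
    measurableSet_le (by fun_prop) measurable_const
  have : ∀ v : Fin k → ℝ, (euclBall (m + k) r).indicator (fun τ : Fin (m + k) → ℝ =>
      f (fun i => τ (Fin.castLE (Nat.le_add_right m k) i))) (e (u, v)) =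
      {v : Fin k → ℝ | ∑ i, u i ^ 2 + ∑ i, v i ^ 2 ≤ r ^ 2}.indicator (fun _ => f u) v := by
    intro v
    have hu : (fun i => Fin.append u v (Fin.castLE (Nat.le_add_right m k) i)) = u := by
      funext i
      exact Fin.append_left u v i
    simp only [Set.indicator_apply, hee, euclBall, Set.mem_ofPred_eq, Fin.sum_univ_add,
      Fin.append_left, Fin.append_right, hu]
  simp_rw [this]
  rw [integral_indicator hms, setIntegral_const, realvol_slice hk hr, smul_eq_mul]
  ring

lemma sum_sq_nonneg' {m : ℕ} (u : Fin m → ℝ) : 0 ≤ ∑ i, u i ^ 2 :=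
  Finset.sum_nonneg fun i _ => sq_nonneg _

lemma exp_sum_eq {m : ℕ} (b : ℝ) (u : Fin m → ℝ) :
    rexp (-b * ∑ i, u i ^ 2) = ∏ i, rexp (-b * u i ^ 2) := by
  rw [← Real.exp_sum, Finset.mul_sum]

lemma gauss_integrable (m : ℕ) {b : ℝ} (hb : 0 < b) :
    Integrable (fun u : Fin m → ℝ => rexp (-b * ∑ i, u i ^ 2)) := by
  simp_rw [exp_sum_eq]
  exact Integrable.fintype_prod fun _ => integrable_exp_neg_mul_sq hb

lemma gauss_integral (m : ℕ) {η : ℝ} (hη : 0 < η) :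
    (∫ u : Fin m → ℝ, rexp (-(∑ i, u i ^ 2) / (2 * η ^ 2)))⁻¹ =
      (2 * π * η ^ 2) ^ (-(m : ℝ) / 2) := by
  have : ∀ u : Fin m → ℝ, rexp (-(∑ i, u i ^ 2) / (2 * η ^ 2)) =
      ∏ i, rexp (-(1 / (2 * η ^ 2)) * u i ^ 2) := by
    intro u
    rw [← exp_sum_eq]; ring_nf
  simp_rw [this]
  rw [integral_fintype_prod_volume_eq_pow (fun x : ℝ => rexp (-(1 / (2 * η ^ 2)) * x ^ 2)),
    integral_gaussian, Fintype.card_fin]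
  have h0 : π / (1 / (2 * η ^ 2)) = 2 * π * η ^ 2 := by field_simp
  have h1 : 0 ≤ 2 * π * η ^ 2 := by positivity
  rw [h0, Real.sqrt_eq_rpow, ← Real.rpow_natCast, ← Real.rpow_mul h1, ← Real.rpow_neg h1]
  ring_nf

lemma kernel_tendsto (m : ℕ) (s : ℝ) :
    Tendsto (fun k : ℕ => (√(1 - s / ((m : ℝ) + k))) ^ k) atTop (𝓝 (rexp (-s / 2))) := by
  have hN : Tendsto (fun k : ℕ => (m + k : ℕ)) atTop atTop := tendsto_add_atTop_nat m |>.congr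
    fun k => by omega
  have h1 := (Real.tendsto_one_add_div_pow_exp (-s)).comp hN
  have h2 : Tendsto (fun k : ℕ => 1 + -s / ((m + k : ℕ) : ℝ)) atTop (𝓝 1) := by
    have := ((tendsto_const_div_atTop_nhds_zero_nat (-s)).comp hN).const_add 1
    simpa using this
  have h3 := h2.pow m
  rw [one_pow] at h3
  have h4 := (h1.div h3 one_ne_zero).sqrt
  rw [div_one] at h4
  have h5 : √(rexp (-s)) = rexp (-s / 2) := by rw [Real.exp_half]
  rw [h5] at h4
  refine h4.congr' ?_
  filter_upwards [h2.eventually (lt_mem_nhds one_pos)] with k hk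
  simp only [Pi.div_apply, Function.comp_apply]
  rw [pow_add, mul_div_cancel_left₀ _ (pow_pos hk m).ne', Real.sqrt_eq_rpow, Real.sqrt_eq_rpow]
  have h6 : 1 - s / ((m : ℝ) + k) = 1 + -s / ((m + k : ℕ) : ℝ) := by push_cast; ring
  rw [h6, ← Real.rpow_natCast, ← Real.rpow_natCast, ← Real.rpow_mul hk.le, ← Real.rpow_mul hk.le,
    mul_comm]

lemma kernel_bound {m k : ℕ} (hk : k ≠ 0) (hmk : m ≤ k) {s : ℝ} (hs : 0 ≤ s) :
    (√(1 - s / ((m : ℝ) + k))) ^ k ≤ rexp (-s / 4) := by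
  have hk' : (0 : ℝ) < k := by positivity
  have hmk' : (m : ℝ) ≤ k := by exact_mod_cast hmk
  have h1 : √(1 - s / ((m : ℝ) + k)) ≤ rexp (-(s / ((m : ℝ) + k)) / 2) := by
    rw [Real.exp_half]
    apply Real.sqrt_le_sqrt
    have := Real.add_one_le_exp (-(s / ((m : ℝ) + k)))
    linarith
  calc _ ≤ (rexp (-(s / ((m : ℝ) + k)) / 2)) ^ k := by gcongr
    _ = rexp (k * (-(s / ((m : ℝ) + k)) / 2)) := by rw [Real.exp_nat_mul]
    _ ≤ _ := by
      apply Real.exp_le_exp.2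
      have : s / 2 ≤ k * (s / (m + k)) := by
        rw [mul_div_assoc', div_le_div_iff₀ (by norm_num) (by positivity)]
        nlinarith
      linarith

lemma lim_integral {m : ℕ} {η : ℝ} (hη : 0 < η)
    (f : (Fin m → ℝ) → ℝ) (hfm : Measurable f) (M : ℝ) (hfb : ∀ x, |f x| ≤ M) :
    Tendsto (fun k : ℕ => ∫ u : Fin m → ℝ,
        f u * (√(1 - (∑ i, u i ^ 2) / (Real.sqrt (m + k) * η) ^ 2)) ^ k) atTop
      (𝓝 (∫ u : Fin m → ℝ, f u * rexp (-(∑ i, u i ^ 2) / (2 * η ^ 2)))) := by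
  have key : ∀ (k : ℕ) (u : Fin m → ℝ), (∑ i, u i ^ 2) / (Real.sqrt (m + k) * η) ^ 2 =
      ((∑ i, u i ^ 2) / η ^ 2) / ((m : ℝ) + k) := by
    intro k u
    rw [mul_pow, Real.sq_sqrt (by positivity), div_div, mul_comm]
  simp_rw [key]
  have hb : 0 < 1 / (4 * η ^ 2) := by positivity
  refine tendsto_integral_filter_of_dominated_convergence
    (fun u => M * rexp (-(1 / (4 * η ^ 2)) * ∑ i, u i ^ 2)) ?_ ?_ ?_ ?_
  · exact Eventually.of_forall fun k => Measurable.aestronglyMeasurable (by fun_prop)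
  · filter_upwards [eventually_ge_atTop (m + 1)] with k hk
    refine Eventually.of_forall fun u => ?_
    rw [norm_mul, Real.norm_eq_abs, Real.norm_eq_abs, abs_of_nonneg (pow_nonneg (sqrt_nonneg _) k)]
    have h1 := kernel_bound (m := m) (k := k) (by omega) (by omega)
      (div_nonneg (sum_sq_nonneg' u) (sq_nonneg η))
    have h2 : -((∑ i, u i ^ 2) / η ^ 2) / 4 = -(1 / (4 * η ^ 2)) * ∑ i, u i ^ 2 := by
      field_simp
    rw [h2] at h1
    exact mul_le_mul (hfb u) h1 (by positivity) ((abs_nonneg _).trans (hfb u))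
  · exact (gauss_integrable m hb).const_mul M
  · refine Eventually.of_forall fun u => ?_
    have h := (kernel_tendsto m ((∑ i, u i ^ 2) / η ^ 2)).const_mul (f u)
    have h2 : -((∑ i, u i ^ 2) / η ^ 2) / 2 = -(∑ i, u i ^ 2) / (2 * η ^ 2) := by
      field_simp
    rwa [h2] at h

/-- Gaussian limit of ball averages.  For a bounded measurable `f : ℝ^m → ℝ` and
`η > 0`, the average of `f(τ₁, …, τ_m)` over the `n`-dimensional ball of radius `√n · η`
converges, as the dimension `n = m + k → ∞`, to the integral of `f` against the i.i.d.
`N(0, η²)` Gaussian density on `ℝ^m`. -/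
theorem ball_average_gaussian_limit {m : ℕ} (hm : 1 ≤ m) (η : ℝ) (hη : 0 < η)
    (f : (Fin m → ℝ) → ℝ) (hfm : Measurable f) (M : ℝ) (hfb : ∀ x, |f x| ≤ M) :
    Tendsto
      (fun k : ℕ =>
        (Bvol (m + k) (Real.sqrt (m + k) * η))⁻¹ *
          ∫ τ in euclBall (m + k) (Real.sqrt (m + k) * η),
            f (fun i => τ (Fin.castLE (Nat.le_add_right m k) i)))
      atTop
      (𝓝 (∫ u : Fin m → ℝ, f u * ((2 * Real.pi * η ^ 2) ^ (-(m : ℝ) / 2) *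
        Real.exp (-(∑ i, (u i) ^ 2) / (2 * η ^ 2))))) := by
  have hG := gauss_integral m hη
  have hG0 : (∫ u : Fin m → ℝ, rexp (-(∑ i, u i ^ 2) / (2 * η ^ 2))) ≠ 0 := by
    intro h
    rw [h, inv_zero] at hG
    have : 0 < (2 * π * η ^ 2) ^ (-(m : ℝ) / 2) := Real.rpow_pos_of_pos (by positivity) _
    exact this.ne hG
  have h1 := lim_integral hη f hfm M hfb
  have h2 := lim_integral (m := m) hη (fun _ => 1) measurable_const 1 (fun _ => by simp)
  simp only [one_mul] at h2
  have h3 := h1.div h2 hG0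
  have hlim : (∫ u : Fin m → ℝ, f u * ((2 * Real.pi * η ^ 2) ^ (-(m : ℝ) / 2) *
        Real.exp (-(∑ i, (u i) ^ 2) / (2 * η ^ 2)))) =
      (∫ u : Fin m → ℝ, f u * rexp (-(∑ i, u i ^ 2) / (2 * η ^ 2))) /
        (∫ u : Fin m → ℝ, rexp (-(∑ i, u i ^ 2) / (2 * η ^ 2))) := by
    rw [div_eq_mul_inv (∫ u : Fin m → ℝ, f u * _), hG, ← integral_mul_const]
    congr 1
    funext u
    ring
  rw [hlim]
  refine h3.congr' ?_
  filter_upwards [eventually_ge_atTop 1] with k hk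
  have hk' : (0 : ℝ) < k := by exact_mod_cast hk
  have hr : 0 < Real.sqrt (m + k) * η := mul_pos (Real.sqrt_pos.2 (by positivity)) hη
  have hk0 : k ≠ 0 := by omega
  have e1 := slicing (m := m) hk0 hr (fun _ => 1) measurable_const 1 (fun _ => by simp)
  simp only [one_mul] at e1
  rw [setIntegral_const, Measure.real, vol_euclBall (by omega) hr.le,
    ENNReal.toReal_ofReal (Bvol_pos _ hr).le, smul_eq_mul, mul_one] at e1
  rw [slicing hk0 hr f hfm M hfb, e1, mul_inv, Pi.div_apply]
  have := (Bvol_pos k hr).ne'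
  rw [div_eq_mul_inv]
  field_simp
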